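/- Let X and Y be real-valued random variables on a common probability space with 0 < Var(X) < ∞, Y Gaussian with Var(Y) > 0, and ρ(X,Y) ≠ 0, and let N be a standard Gaussian random variable on the same space independent of (X,Y). Then for every ε ∈ [0, ρ_m(X,Y)²]: 1 − ε/ρ(X,Y)² ≤ sENSR(ε) ≤ 1 − ε/ρ_m(X,Y)². -/

import Mathlib

open MeasureTheory ProbabilityTheory

variable {Ω : Type*} [MeasurableSpace Ω]

/-- `mmse(W|V) = E[(W − E[W|V])²]`: the minimum mean squared error of estimating `W`
from `V` (conditional expectation taken w.r.t. the σ-algebra generated by `V`). -/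
noncomputable def mmse (μ : Measure Ω) (W V : Ω → ℝ) : ℝ :=
  ∫ ω, (W ω - (μ[W | MeasurableSpace.comap V Real.measurableSpace]) ω) ^ 2 ∂μ

/-- The Pearson correlation coefficient `ρ(U,V)`. -/
noncomputable def corr (μ : Measure Ω) (U V : Ω → ℝ) : ℝ :=
  (∫ ω, (U ω - ∫ x, U x ∂μ) * (V ω - ∫ x, V x ∂μ) ∂μ) /
    (Real.sqrt (variance U μ) * Real.sqrt (variance V μ))

/-- `f ∈ S_U`: `f` is Borel measurable and `0 < Var(f(U)) < ∞`. -/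
def MemS (μ : Measure Ω) (U : Ω → ℝ) (f : ℝ → ℝ) : Prop :=
  Measurable f ∧ 0 < evariance (f ∘ U) μ ∧ evariance (f ∘ U) μ < ⊤

/-- The Hirschfeld–Gebelein–Rényi maximal correlation
`ρ_m(U,V) = sup{ρ(f(U), g(V)) : f ∈ S_U, g ∈ S_V}` (equal to `0`, the real `sSup` of
the empty set, if `S_U` or `S_V` is empty). -/
noncomputable def maxCorr (μ : Measure Ω) (U V : Ω → ℝ) : ℝ :=
  sSup {c | ∃ f g : ℝ → ℝ, MemS μ U f ∧ MemS μ V g ∧ c = corr μ (f ∘ U) (g ∘ V)}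

/-- The Gaussian perturbation `Z_γ = √γ·Y + N`. -/
noncomputable def Zgamma (Y N : Ω → ℝ) (γ : ℝ) : Ω → ℝ :=
  fun ω => Real.sqrt γ * Y ω + N ω

/-- The strong estimation noise-to-signal ratio
`sENSR(ε) = inf{mmse(Y|Z_γ)/Var(Y) : γ ≥ 0, ρ_m(X,Z_γ)² ≤ ε}`. -/
noncomputable def sENSR (μ : Measure Ω) (X Y N : Ω → ℝ) (ε : ℝ) : ℝ :=
  sInf {r | ∃ γ : ℝ, 0 ≤ γ ∧ maxCorr μ X (Zgamma Y N γ) ^ 2 ≤ ε ∧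
    r = mmse μ Y (Zgamma Y N γ) / variance Y μ}

/-!
Write `r = ρ(Y, Z_γ)²`, which takes every value in `[0, 1)` as `γ` runs over `[0, ∞)`. Since
`(Y, Z_γ)` is jointly Gaussian, the regression of `Y` on `Z_γ` is linear and
`mmse(Y | Z_γ) / Var(Y) = 1 - r`, so the theorem compares the constraint `ρ_m(X, Z_γ)² ≤ ε` with
one on `r`:

* `ρ(X, Z_γ) = ρ(X, Y) ρ(Y, Z_γ)` because `N` is uncorrelated with `X` and `Y`, whence
  `ρ(X, Y)² r ≤ ρ_m(X, Z_γ)²`;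
* `X → Y → Z_γ` is a Markov chain, along which the maximal correlation is submultiplicative, and
  for jointly Gaussian variables the maximal correlation is `|ρ|` (Gebelein), whence
  `ρ_m(X, Z_γ)² ≤ ρ_m(X, Y)² r`.

Gebelein's theorem is proved without Hermite polynomials. Normalised exponentials of two Gaussian
variables with correlation `ρ` have covariances `exp(ρ t u) - 1`; expanding in powers of `ρ` and
comparing with the case `ρ = 1` bounds the correlation of their linear combinations by `|ρ|`, and
these combinations are dense in the space of square-integrable functions of each variable because
the moment generating function determines a law.
-/

section CenteredLp

variable {μ : Measure Ω} [IsProbabilityMeasure μ] {X Y : Ω → ℝ}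

lemma covariance_eq_integral_mul_sub (hX : MemLp X 2 μ) (hY : MemLp Y 2 μ) :
    cov[X, Y; μ] = ∫ ω, X ω * (Y ω - μ[Y]) ∂μ := by
  have hY₀ : MemLp (fun ω => Y ω - μ[Y]) 2 μ := hY.sub (memLp_const _)
  have hmean : μ[fun ω => Y ω - μ[Y]] = 0 := by
    rw [integral_sub (hY.integrable one_le_two) (integrable_const _)]
    simp
  rw [← covariance_sub_const_right (hY.integrable one_le_two) μ[Y], covariance_eq_sub hX hY₀,
    hmean, mul_zero, sub_zero]
  rfl

/-- The centred random variable `X − E[X]` as an element of `L²(μ)`, so that covariances of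
square-integrable random variables become inner products in a Hilbert space. -/
noncomputable def centeredLp (hX : MemLp X 2 μ) : Lp ℝ 2 μ :=
  (hX.sub (memLp_const μ[X])).toLp

lemma inner_centeredLp (hX : MemLp X 2 μ) (hY : MemLp Y 2 μ) :
    inner ℝ (centeredLp hX) (centeredLp hY) = cov[X, Y; μ] := by
  rw [L2.inner_def, covariance]
  refine integral_congr_ae ?_
  filter_upwards [(hX.sub (memLp_const μ[X])).coeFn_toLp,
    (hY.sub (memLp_const μ[Y])).coeFn_toLp] with ω hXω hYω
  simp only [centeredLp, hXω, hYω, Pi.sub_apply, RCLike.inner_apply, conj_trivial, mul_comm]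

lemma inner_centeredLp_left (hX : MemLp X 2 μ) (G : Lp ℝ 2 μ) :
    inner ℝ (centeredLp hX) G = cov[X, G; μ] := by
  rw [covariance_comm, covariance_eq_integral_mul_sub (Lp.memLp G) hX, L2.inner_def]
  refine integral_congr_ae ?_
  filter_upwards [(hX.sub (memLp_const μ[X])).coeFn_toLp] with ω hω
  exact congrArg (G ω * ·) hω

lemma norm_centeredLp (hX : MemLp X 2 μ) : ‖centeredLp hX‖ = √Var[X; μ] := by
  rw [norm_eq_sqrt_real_inner, inner_centeredLp, covariance_self hX.aemeasurable]

lemma abs_covariance_le_sqrt_variance_mul (hX : MemLp X 2 μ) (hY : MemLp Y 2 μ) :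
    |cov[X, Y; μ]| ≤ √Var[X; μ] * √Var[Y; μ] := by
  rw [← inner_centeredLp hX hY, ← norm_centeredLp hX, ← norm_centeredLp hY]
  exact abs_real_inner_le_norm _ _

end CenteredLp

section MaximalCorrelation

variable {μ : Measure Ω} {U V : Ω → ℝ} {f g : ℝ → ℝ}

lemma corr_eq_covariance_div (μ : Measure Ω) (U V : Ω → ℝ) :
    corr μ U V = cov[U, V; μ] / (√Var[U; μ] * √Var[V; μ]) := rfl

lemma sq_corr (μ : Measure Ω) (U V : Ω → ℝ) :
    corr μ U V ^ 2 = cov[U, V; μ] ^ 2 / (Var[U; μ] * Var[V; μ]) := by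
  rw [corr_eq_covariance_div, div_pow, mul_pow, Real.sq_sqrt (variance_nonneg U μ),
    Real.sq_sqrt (variance_nonneg V μ)]

lemma corr_self (hU : AEMeasurable U μ) (hVarU : 0 < Var[U; μ]) : corr μ U U = 1 := by
  rw [corr_eq_covariance_div, covariance_self hU, Real.mul_self_sqrt hVarU.le,
    div_self hVarU.ne']

lemma corr_neg_left (μ : Measure Ω) (U V : Ω → ℝ) : corr μ (-U) V = -corr μ U V := by
  rw [corr_eq_covariance_div, corr_eq_covariance_div, covariance_neg_left, variance_neg, neg_div]

lemma abs_corr_le_one [IsProbabilityMeasure μ] (hU : MemLp U 2 μ) (hV : MemLp V 2 μ) :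
    |corr μ U V| ≤ 1 := by
  have hσ : 0 ≤ √Var[U; μ] * √Var[V; μ] := by positivity
  rw [corr_eq_covariance_div, abs_div, abs_of_nonneg hσ]
  exact div_le_one_of_le₀ (abs_covariance_le_sqrt_variance_mul hU hV) hσ

lemma MemS.memLp [IsFiniteMeasure μ] (hf : MemS μ U f) (hU : Measurable U) :
    MemLp (f ∘ U) 2 μ :=
  (evariance_lt_top_iff_memLp (hf.1.comp hU).aestronglyMeasurable).1 hf.2.2

lemma MemS.variance_pos (hf : MemS μ U f) : 0 < Var[f ∘ U; μ] :=
  ENNReal.toReal_pos hf.2.1.ne' hf.2.2.ne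

lemma memS_of_variance_pos (hf : Measurable f) (h : 0 < Var[f ∘ U; μ]) : MemS μ U f :=
  ⟨hf, ENNReal.toReal_pos_iff.1 h⟩

lemma MemS.neg (hf : MemS μ U f) : MemS μ U (-f) :=
  memS_of_variance_pos hf.1.neg (hf.variance_pos.trans_eq variance_neg.symm)

lemma maxCorr_le_of_forall_covariance_le {c : ℝ} (hc : 0 ≤ c)
    (h : ∀ f g, MemS μ U f → MemS μ V g →
      cov[f ∘ U, g ∘ V; μ] ≤ c * (√Var[f ∘ U; μ] * √Var[g ∘ V; μ])) :
    maxCorr μ U V ≤ c := by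
  refine Real.sSup_le ?_ hc
  rintro _ ⟨f, g, hf, hg, rfl⟩
  have hσ : 0 < √Var[f ∘ U; μ] * √Var[g ∘ V; μ] :=
    mul_pos (Real.sqrt_pos.2 hf.variance_pos) (Real.sqrt_pos.2 hg.variance_pos)
  exact (div_le_iff₀ hσ).2 (h f g hf hg)

variable [IsProbabilityMeasure μ] (hU : Measurable U) (hV : Measurable V)
include hU hV

lemma corr_comp_le_maxCorr (hf : MemS μ U f) (hg : MemS μ V g) :
    corr μ (f ∘ U) (g ∘ V) ≤ maxCorr μ U V := by
  refine le_csSup ⟨1, ?_⟩ ⟨f, g, hf, hg, rfl⟩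
  rintro _ ⟨f', g', hf', hg', rfl⟩
  exact (le_abs_self _).trans (abs_corr_le_one (hf'.memLp hU) (hg'.memLp hV))

lemma abs_corr_comp_le_maxCorr (hf : MemS μ U f) (hg : MemS μ V g) :
    |corr μ (f ∘ U) (g ∘ V)| ≤ maxCorr μ U V := by
  refine abs_le'.2 ⟨corr_comp_le_maxCorr hU hV hf hg, ?_⟩
  rw [← corr_neg_left]
  exact corr_comp_le_maxCorr hU hV hf.neg hg

lemma maxCorr_nonneg : 0 ≤ maxCorr μ U V := by
  by_cases h : ∃ f g : ℝ → ℝ, MemS μ U f ∧ MemS μ V g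
  · obtain ⟨f, g, hf, hg⟩ := h
    exact (abs_nonneg _).trans (abs_corr_comp_le_maxCorr hU hV hf hg)
  · refine Real.sSup_nonneg ?_
    rintro _ ⟨f, g, hf, hg, rfl⟩
    exact absurd ⟨f, g, hf, hg⟩ h

lemma abs_corr_le_maxCorr (hVarU : 0 < Var[U; μ]) (hVarV : 0 < Var[V; μ]) :
    |corr μ U V| ≤ maxCorr μ U V :=
  abs_corr_comp_le_maxCorr hU hV (memS_of_variance_pos measurable_id hVarU)
    (memS_of_variance_pos measurable_id hVarV)

lemma covariance_comp_le_maxCorr_mul (hf : Measurable f) (hg : Measurable g)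
    (hfU : MemLp (f ∘ U) 2 μ) (hgV : MemLp (g ∘ V) 2 μ) :
    cov[f ∘ U, g ∘ V; μ] ≤ maxCorr μ U V * (√Var[f ∘ U; μ] * √Var[g ∘ V; μ]) := by
  rcases (by positivity : 0 ≤ √Var[f ∘ U; μ] * √Var[g ∘ V; μ]).eq_or_lt with hσ | hσ
  · rw [← hσ, mul_zero, hσ]
    exact (le_abs_self _).trans (abs_covariance_le_sqrt_variance_mul hfU hgV)
  · have hVarf := Real.sqrt_pos.1 (pos_of_mul_pos_left hσ (Real.sqrt_nonneg _))
    have hVarg := Real.sqrt_pos.1 (pos_of_mul_pos_right hσ (Real.sqrt_nonneg _))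
    exact (div_le_iff₀ hσ).1 (corr_comp_le_maxCorr hU hV (memS_of_variance_pos hf hVarf)
      (memS_of_variance_pos hg hVarg))

end MaximalCorrelation

section DataProcessing

lemma condExp_prodMk_ae_eq_integral_of_indepFun {α β E : Type*} [MeasurableSpace α]
    [MeasurableSpace β] [StandardBorelSpace β] [Nonempty β] [NormedAddCommGroup E] [NormedSpace ℝ E]
    [CompleteSpace E] {μ : Measure Ω} [IsFiniteMeasure μ] {W : Ω → α} {N : Ω → β} {F : α × β → E}
    (hW : Measurable W) (hN : Measurable N) (hWN : IndepFun W N μ) (hF : StronglyMeasurable F)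
    (hint : Integrable (fun ω => F (W ω, N ω)) μ) :
    μ[fun ω => F (W ω, N ω) | MeasurableSpace.comap W inferInstance] =ᵐ[μ]
      fun ω => ∫ n, F (W ω, n) ∂μ.map N := by
  have hlaw : condDistrib N W μ =ᵐ[μ.map W] Kernel.const α (μ.map N) :=
    condDistrib_ae_eq_of_measure_eq_compProd W hN.aemeasurable <| by
      rw [hWN.map_prod_eq_prod_map_map hW.aemeasurable hN.aemeasurable, Measure.compProd_const]
  refine (condExp_prod_ae_eq_integral_condDistrib hW hN.aemeasurable hF hint).trans ?_
  filter_upwards [ae_of_ae_map hW.aemeasurable hlaw] with ω hω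
  rw [hω, Kernel.const_apply]

lemma covariance_eq_of_condExp_ae_eq {α : Type*} {m m₀ : MeasurableSpace α} {μ : Measure α}
    [IsProbabilityMeasure μ] (hm : m ≤ m₀) {W G H : α → ℝ} (hWm : StronglyMeasurable[m] W)
    (hW : MemLp W 2 μ) (hG : MemLp G 2 μ) (hH : μ[G | m] =ᵐ[μ] H) :
    cov[W, G; μ] = cov[W, H; μ] := by
  have hpull : μ[W * G | m] =ᵐ[μ] W * H :=
    (condExp_mul_of_stronglyMeasurable_left hWm (hW.integrable_mul hG)
      (hG.integrable one_le_two)).trans (hH.mono fun ω hω => by simp only [Pi.mul_apply, hω])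
  have hH2 : MemLp H 2 μ := (hG.condExp one_le_two).ae_eq hH
  rw [covariance_eq_sub hW hG, covariance_eq_sub hW hH2, ← integral_congr_ae hpull,
    ← integral_congr_ae hH, integral_condExp hm, integral_condExp hm]

variable {μ : Measure Ω} [IsProbabilityMeasure μ]

/-- The hypothesis `hMarkov` says that `X → Y → Z` is a Markov chain. -/
lemma maxCorr_le_maxCorr_mul_maxCorr {X Y Z : Ω → ℝ}
    (hX : Measurable X) (hY : Measurable Y) (hZ : Measurable Z)
    (hMarkov : ∀ g, MemS μ Z g → ∃ h : ℝ → ℝ, Measurable h ∧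
      μ[g ∘ Z | MeasurableSpace.comap (fun ω => (X ω, Y ω)) inferInstance] =ᵐ[μ] h ∘ Y) :
    maxCorr μ X Z ≤ maxCorr μ X Y * maxCorr μ Y Z := by
  refine maxCorr_le_of_forall_covariance_le
    (mul_nonneg (maxCorr_nonneg hX hY) (maxCorr_nonneg hY hZ)) fun f g hf hg => ?_
  obtain ⟨h, hh, hcond⟩ := hMarkov g hg
  have hXY := comap_measurable (m := inferInstance) fun ω => (X ω, Y ω)
  have hfX := hf.memLp hX
  have hgZ := hg.memLp hZ
  have hhY : MemLp (h ∘ Y) 2 μ := (hgZ.condExp one_le_two).ae_eq hcond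
  have hcov (φ : Ω → ℝ)
      (hφm : Measurable[MeasurableSpace.comap (fun ω => (X ω, Y ω)) inferInstance] φ)
      (hφ : MemLp φ 2 μ) :
      cov[φ, g ∘ Z; μ] = cov[φ, h ∘ Y; μ] :=
    covariance_eq_of_condExp_ae_eq (hX.prodMk hY).comap_le hφm.stronglyMeasurable hφ hgZ hcond
  have hσ : √Var[h ∘ Y; μ] ≤ maxCorr μ Y Z * √Var[g ∘ Z; μ] := by
    rcases (Real.sqrt_nonneg Var[h ∘ Y; μ]).eq_or_lt with h0 | hpos
    · rw [← h0]
      exact mul_nonneg (maxCorr_nonneg hY hZ) (Real.sqrt_nonneg _)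
    · refine le_of_mul_le_mul_left ?_ hpos
      calc √Var[h ∘ Y; μ] * √Var[h ∘ Y; μ] = cov[h ∘ Y, g ∘ Z; μ] := by
            rw [Real.mul_self_sqrt (variance_nonneg _ _),
              hcov (h ∘ Y) (hh.comp (measurable_snd.comp hXY)) hhY,
              covariance_self hhY.aemeasurable]
        _ ≤ maxCorr μ Y Z * (√Var[h ∘ Y; μ] * √Var[g ∘ Z; μ]) :=
            covariance_comp_le_maxCorr_mul hY hZ hh hg.1 hhY hgZ
        _ = √Var[h ∘ Y; μ] * (maxCorr μ Y Z * √Var[g ∘ Z; μ]) := by ring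
  calc cov[f ∘ X, g ∘ Z; μ] = cov[f ∘ X, h ∘ Y; μ] :=
        hcov (f ∘ X) (hf.1.comp (measurable_fst.comp hXY)) hfX
    _ ≤ maxCorr μ X Y * (√Var[f ∘ X; μ] * √Var[h ∘ Y; μ]) :=
        covariance_comp_le_maxCorr_mul hX hY hf.1 hh hfX hhY
    _ ≤ maxCorr μ X Y * (√Var[f ∘ X; μ] * (maxCorr μ Y Z * √Var[g ∘ Z; μ])) := by
        gcongr
        exact maxCorr_nonneg hX hY
    _ = maxCorr μ X Y * maxCorr μ Y Z * (√Var[f ∘ X; μ] * √Var[g ∘ Z; μ]) := by ring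

lemma maxCorr_comp_indepFun_le {β : Type*} [MeasurableSpace β] [StandardBorelSpace β]
    [Nonempty β] {X Y : Ω → ℝ} {N : Ω → β} {φ : ℝ × β → ℝ} (hX : Measurable X) (hY : Measurable Y)
    (hN : Measurable N) (hindep : IndepFun (fun ω => (X ω, Y ω)) N μ) (hφ : Measurable φ) :
    maxCorr μ X (fun ω => φ (Y ω, N ω)) ≤
      maxCorr μ X Y * maxCorr μ Y (fun ω => φ (Y ω, N ω)) := by
  have hZ : Measurable fun ω => φ (Y ω, N ω) := hφ.comp (hY.prodMk hN)
  have : IsProbabilityMeasure (μ.map N) := Measure.isProbabilityMeasure_map hN.aemeasurable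
  refine maxCorr_le_maxCorr_mul_maxCorr hX hY hZ fun g hg => ?_
  have hgφ : Measurable fun p : ℝ × β => g (φ p) := hg.1.comp hφ
  refine ⟨fun y => ∫ n, g (φ (y, n)) ∂μ.map N,
    hgφ.stronglyMeasurable.integral_prod_right'.measurable, ?_⟩
  exact condExp_prodMk_ae_eq_integral_of_indepFun (F := fun p : (ℝ × ℝ) × β => g (φ (p.1.2, p.2)))
    (hX.prodMk hY) hN hindep
    (hgφ.comp (by fun_prop)).stronglyMeasurable ((hg.memLp hZ).integrable one_le_two)

end DataProcessing

section ExponentialTotality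

variable {μ : Measure Ω} {U G H : Ω → ℝ}

lemma map_eq_map_of_mgf_eq {α β : Type*} [MeasurableSpace α] [MeasurableSpace β]
    {μ : Measure α} {ν : Measure β} [IsFiniteMeasure μ] [IsFiniteMeasure ν] {U : α → ℝ} {V : β → ℝ}
    (hU : AEMeasurable U μ) (hV : AEMeasurable V ν) (hint : integrableExpSet U μ = Set.univ)
    (h : mgf U μ = mgf V ν) : μ.map U = ν.map V := by
  have hmass : μ.real Set.univ = ν.real Set.univ := by
    rw [← mgf_zero' (X := U), ← mgf_zero' (X := V), h]
  have hzero : μ = 0 ↔ ν = 0 := by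
    rw [← Measure.measure_univ_eq_zero, ← Measure.measure_univ_eq_zero, ← measureReal_eq_zero_iff,
      hmass, measureReal_eq_zero_iff]
  refine Measure.ext_of_complexMGF_eq hU hV (funext fun z => ?_)
  exact eqOn_complexMGF_of_mgf' h hzero (by simp [hint])

lemma integrable_withDensity_ofReal (hG : AEMeasurable G μ)
    (hHG : Integrable (fun ω => H ω * G ω) μ) (hH : AEStronglyMeasurable H μ) :
    Integrable H (μ.withDensity fun ω => ENNReal.ofReal (G ω)) := by
  rw [integrable_withDensity_iff_integrable_smul₀' hG.ennreal_ofReal (by simp)]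
  refine hHG.mono (hG.ennreal_ofReal.ennreal_toReal.aestronglyMeasurable.smul hH)
    (ae_of_all _ fun ω => ?_)
  rw [smul_eq_mul, norm_mul, norm_mul, mul_comm ‖H ω‖, ENNReal.toReal_ofReal',
    Real.norm_of_nonneg (le_max_right _ _)]
  gcongr
  exact max_le (le_abs_self _) (abs_nonneg _)

lemma integral_withDensity_ofReal_sub (hG : AEMeasurable G μ)
    (hHG : Integrable (fun ω => H ω * G ω) μ) (hH : AEStronglyMeasurable H μ) :
    ∫ ω, H ω ∂μ.withDensity (fun ω => ENNReal.ofReal (G ω)) -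
      ∫ ω, H ω ∂μ.withDensity (fun ω => ENNReal.ofReal (-G ω)) = ∫ ω, H ω * G ω ∂μ := by
  have hHG' : Integrable (fun ω => H ω * -G ω) μ := by
    simpa only [mul_neg] using hHG.fun_neg
  have hpos := integrable_withDensity_ofReal hG hHG hH
  have hneg := integrable_withDensity_ofReal hG.fun_neg hHG' hH
  rw [integrable_withDensity_iff_integrable_smul₀' hG.ennreal_ofReal (by simp)] at hpos
  rw [integrable_withDensity_iff_integrable_smul₀' hG.fun_neg.ennreal_ofReal (by simp)] at hneg
  rw [integral_withDensity_eq_integral_toReal_smul₀ hG.ennreal_ofReal (by simp),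
    integral_withDensity_eq_integral_toReal_smul₀ hG.fun_neg.ennreal_ofReal (by simp),
    ← integral_sub hpos hneg]
  congr with ω
  rw [← sub_smul, ENNReal.toReal_ofReal', ENNReal.toReal_ofReal',
    max_zero_sub_max_neg_zero_eq_self, smul_eq_mul, mul_comm]

lemma map_withDensity_ofReal_eq_of_integral_exp_mul_eq_zero (hU : Measurable U)
    (hint : ∀ t, Integrable (fun ω => Real.exp (t * U ω) * G ω) μ)
    (h0 : ∀ t, ∫ ω, Real.exp (t * U ω) * G ω ∂μ = 0) :
    (μ.withDensity fun ω => ENNReal.ofReal (G ω)).map U =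
      (μ.withDensity fun ω => ENNReal.ofReal (-G ω)).map U := by
  have hG : Integrable G μ := by simpa using hint 0
  have := isFiniteMeasure_withDensity_ofReal hG.2
  have := isFiniteMeasure_withDensity_ofReal hG.neg.2
  refine map_eq_map_of_mgf_eq hU.aemeasurable hU.aemeasurable ?_ (funext fun t => ?_)
  · exact Set.eq_univ_of_forall fun t => integrable_withDensity_ofReal hG.aemeasurable (hint t)
      (by fun_prop)
  · exact sub_eq_zero.1 <|
      (integral_withDensity_ofReal_sub hG.aemeasurable (hint t) (by fun_prop)).trans (h0 t)

lemma integral_comp_mul_eq_zero_of_integral_exp_mul_eq_zero (hU : Measurable U)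
    (hint : ∀ t, Integrable (fun ω => Real.exp (t * U ω) * G ω) μ)
    (h0 : ∀ t, ∫ ω, Real.exp (t * U ω) * G ω ∂μ = 0) {f : ℝ → ℝ} (hf : Measurable f)
    (hfG : Integrable (fun ω => f (U ω) * G ω) μ) : ∫ ω, f (U ω) * G ω ∂μ = 0 := by
  have hG : Integrable G μ := by simpa using hint 0
  have hlaw := map_withDensity_ofReal_eq_of_integral_exp_mul_eq_zero hU hint h0
  rw [← integral_withDensity_ofReal_sub hG.aemeasurable hfG (hf.comp hU).aestronglyMeasurable,
    sub_eq_zero, ← integral_map hU.aemeasurable hf.aestronglyMeasurable, hlaw,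
    integral_map hU.aemeasurable hf.aestronglyMeasurable]

lemma covariance_comp_eq_zero_of_covariance_exp_eq_zero [IsProbabilityMeasure μ]
    (hU : Measurable U) (hexp : ∀ t, MemLp (fun ω => Real.exp (t * U ω)) 2 μ) (hG : MemLp G 2 μ)
    (h0 : ∀ t, cov[fun ω => Real.exp (t * U ω), G; μ] = 0) {f : ℝ → ℝ} (hf : Measurable f)
    (hfU : MemLp (f ∘ U) 2 μ) : cov[f ∘ U, G; μ] = 0 := by
  have hG₀ : MemLp (fun ω => G ω - μ[G]) 2 μ := hG.sub (memLp_const _)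
  rw [covariance_eq_integral_mul_sub hfU hG]
  exact integral_comp_mul_eq_zero_of_integral_exp_mul_eq_zero hU
    (fun t => (hexp t).integrable_mul hG₀)
    (fun t => (covariance_eq_integral_mul_sub (hexp t) hG).symm.trans (h0 t)) hf
    (hfU.integrable_mul hG₀)

end ExponentialTotality

section MehlerKernel

variable {r : ℝ}

lemma hasSum_sum_sum_exp_mul_sub_one (S T : Finset ℝ) (a b : ℝ → ℝ) (r : ℝ) :
    HasSum (fun n : ℕ => r ^ (n + 1) / (n + 1).factorial *
        ((∑ t ∈ S, a t * t ^ (n + 1)) * ∑ u ∈ T, b u * u ^ (n + 1)))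
      (∑ t ∈ S, ∑ u ∈ T, a t * b u * (Real.exp (r * (t * u)) - 1)) := by
  have hexp (x : ℝ) :
      HasSum (fun n : ℕ => x ^ (n + 1) / (n + 1).factorial) (Real.exp x - 1) := by
    have := NormedSpace.expSeries_div_hasSum_exp (𝔸 := ℝ) x
    rw [← Real.exp_eq_exp_ℝ, ← hasSum_nat_add_iff' 1] at this
    simpa using this
  refine (hasSum_sum fun t _ => hasSum_sum fun u _ =>
    (hexp (r * (t * u))).mul_left (a t * b u)).congr_fun fun n => ?_
  rw [Finset.sum_mul_sum, Finset.mul_sum]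
  refine Finset.sum_congr rfl fun t _ => ?_
  rw [Finset.mul_sum]
  refine Finset.sum_congr rfl fun u _ => ?_
  rw [mul_pow, mul_pow]
  ring

lemma two_mul_sum_sum_exp_mul_sub_one_le (S T : Finset ℝ) (a b : ℝ → ℝ) (hr : |r| ≤ 1) :
    2 * ∑ t ∈ S, ∑ u ∈ T, a t * b u * (Real.exp (r * (t * u)) - 1) ≤
      |r| * (∑ t ∈ S, ∑ u ∈ S, a t * a u * (Real.exp (t * u) - 1) +
        ∑ t ∈ T, ∑ u ∈ T, b t * b u * (Real.exp (t * u) - 1)) := by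
  have hcross := (hasSum_sum_sum_exp_mul_sub_one S T a b r).mul_left 2
  have hSS := hasSum_sum_sum_exp_mul_sub_one S S a a 1
  have hTT := hasSum_sum_sum_exp_mul_sub_one T T b b 1
  simp only [one_mul] at hSS hTT
  refine hasSum_le (fun n => ?_) hcross ((hSS.add hTT).mul_left |r|)
  set A := ∑ t ∈ S, a t * t ^ (n + 1)
  set B := ∑ u ∈ T, b u * u ^ (n + 1)
  have hpow : |r ^ (n + 1)| ≤ |r| := by
    rw [abs_pow]
    exact pow_le_of_le_one (abs_nonneg r) hr n.succ_ne_zero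
  have hAB : 2 * (r ^ (n + 1) * (A * B)) ≤ |r| * (A * A + B * B) :=
    calc 2 * (r ^ (n + 1) * (A * B)) ≤ |r ^ (n + 1)| * (2 * |A| * |B|) := by
          refine (le_abs_self _).trans_eq ?_
          rw [abs_mul, abs_mul, abs_mul, abs_two]
          ring
      _ ≤ |r| * (|A| ^ 2 + |B| ^ 2) := by
          gcongr
          exact two_mul_le_add_sq _ _
      _ = |r| * (A * A + B * B) := by rw [sq_abs, sq_abs, sq, sq]
  calc 2 * (r ^ (n + 1) / (n + 1).factorial * (A * B))
      = 2 * (r ^ (n + 1) * (A * B)) / (n + 1).factorial := by ring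
    _ ≤ |r| * (A * A + B * B) / (n + 1).factorial := by gcongr
    _ = _ := by rw [one_pow]; ring

variable {H : Type*} [NormedAddCommGroup H] [InnerProductSpace ℝ H] {e e' : ℝ → H}

lemma inner_sum_smul_sum_smul (S T : Finset ℝ) (a b : ℝ → ℝ) :
    inner ℝ (∑ t ∈ S, a t • e t) (∑ u ∈ T, b u • e' u) =
      ∑ t ∈ S, ∑ u ∈ T, a t * b u * inner ℝ (e t) (e' u) := by
  simp only [sum_inner, inner_sum, real_inner_smul_left, real_inner_smul_right]
  rw [Finset.sum_comm]
  simp only [mul_left_comm, mul_assoc]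

variable (hr : |r| ≤ 1) (he : ∀ t u, inner ℝ (e t) (e u) = Real.exp (t * u) - 1)
  (he' : ∀ t u, inner ℝ (e' t) (e' u) = Real.exp (t * u) - 1)
  (hee' : ∀ t u, inner ℝ (e t) (e' u) = Real.exp (r * (t * u)) - 1) {F G : H}
include hr he he' hee'

lemma two_mul_inner_le_of_mem_span (hF : F ∈ Submodule.span ℝ (Set.range e))
    (hG : G ∈ Submodule.span ℝ (Set.range e')) :
    2 * inner ℝ F G ≤ |r| * (‖F‖ ^ 2 + ‖G‖ ^ 2) := by
  obtain ⟨a, rfl⟩ := Finsupp.mem_span_range_iff_exists_finsupp.1 hF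
  obtain ⟨b, rfl⟩ := Finsupp.mem_span_range_iff_exists_finsupp.1 hG
  simp only [Finsupp.sum, ← real_inner_self_eq_norm_sq, inner_sum_smul_sum_smul, he, he', hee']
  exact two_mul_sum_sum_exp_mul_sub_one_le a.support b.support a b hr

lemma two_mul_inner_le_of_mem_closure_span
    (hF : F ∈ (Submodule.span ℝ (Set.range e)).topologicalClosure)
    (hG : G ∈ (Submodule.span ℝ (Set.range e')).topologicalClosure) :
    2 * inner ℝ F G ≤ |r| * (‖F‖ ^ 2 + ‖G‖ ^ 2) := by
  have hclosed : IsClosed {p : H × H | 2 * inner ℝ p.1 p.2 ≤ |r| * (‖p.1‖ ^ 2 + ‖p.2‖ ^ 2)} :=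
    isClosed_le (by fun_prop) (by fun_prop)
  have hspan : (Submodule.span ℝ (Set.range e) : Set H) ×ˢ
      (Submodule.span ℝ (Set.range e') : Set H) ⊆
        {p | 2 * inner ℝ p.1 p.2 ≤ |r| * (‖p.1‖ ^ 2 + ‖p.2‖ ^ 2)} :=
    fun p hp => two_mul_inner_le_of_mem_span hr he he' hee' hp.1 hp.2
  refine closure_minimal hspan hclosed (a := (F, G)) ?_
  rw [closure_prod_eq]
  exact ⟨hF, hG⟩

/-- Mehler's inequality: `e` and `e'` play the roles of the centred generating functions
of the Hermite polynomials in two standard Gaussian variables with correlation `r`. -/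
lemma inner_le_abs_mul_norm_mul_norm_of_mem_closure_span
    (hF : F ∈ (Submodule.span ℝ (Set.range e)).topologicalClosure)
    (hG : G ∈ (Submodule.span ℝ (Set.range e')).topologicalClosure) :
    inner ℝ F G ≤ |r| * (‖F‖ * ‖G‖) := by
  rcases eq_or_ne F 0 with rfl | hF0
  · simp
  rcases eq_or_ne G 0 with rfl | hG0
  · simp
  have hpos : 0 < ‖F‖ * ‖G‖ := mul_pos (norm_pos_iff.2 hF0) (norm_pos_iff.2 hG0)
  have hscaled := two_mul_inner_le_of_mem_closure_span hr he he' hee'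
    (Submodule.smul_mem _ ‖G‖ hF) (Submodule.smul_mem _ ‖F‖ hG)
  rw [real_inner_smul_left, real_inner_smul_right, norm_smul, norm_smul, norm_norm, norm_norm]
    at hscaled
  refine le_of_mul_le_mul_left ?_ hpos
  linarith

end MehlerKernel

section GaussianGeneratingFunction

variable {μ : Measure Ω} {U V : Ω → ℝ}

lemma memLp_two_exp_mul_of_hasGaussianLaw (hU : HasGaussianLaw U μ) (t : ℝ) :
    MemLp (fun ω => Real.exp (t * U ω)) 2 μ := by
  have hmeas : AEStronglyMeasurable (fun ω => Real.exp (t * U ω)) μ :=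
    (Real.measurable_exp.comp_aemeasurable (hU.aemeasurable.const_mul t)).aestronglyMeasurable
  have hint : Integrable (fun x => Real.exp (2 * t * x)) (μ.map U) := by
    rw [hU.map_eq_gaussianReal]
    exact integrable_exp_mul_gaussianReal (2 * t)
  refine (memLp_two_iff_integrable_sq hmeas).2 ((hint.comp_aemeasurable hU.aemeasurable).congr ?_)
  refine ae_of_all _ fun ω => ?_
  simp only [Function.comp_apply, ← Real.exp_nat_mul, Nat.cast_ofNat, mul_assoc]

lemma mgf_eq_exp_of_hasGaussianLaw (hU : HasGaussianLaw U μ) (t : ℝ) :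
    mgf U μ t = Real.exp (μ[U] * t + Var[U; μ] * t ^ 2 / 2) := by
  rw [mgf_gaussianReal hU.map_eq_gaussianReal, Real.coe_toNNReal _ (variance_nonneg U μ)]

lemma mgf_ne_zero_of_hasGaussianLaw (hU : HasGaussianLaw U μ) (t : ℝ) : mgf U μ t ≠ 0 := by
  rw [mgf_eq_exp_of_hasGaussianLaw hU]
  exact (Real.exp_pos _).ne'

lemma hasGaussianLaw_linear_combination (hUV : HasGaussianLaw (fun ω => (U ω, V ω)) μ) (s t : ℝ) :
    HasGaussianLaw (fun ω => s * U ω + t * V ω) μ :=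
  hUV.map_fun (s • ContinuousLinearMap.fst ℝ ℝ ℝ + t • ContinuousLinearMap.snd ℝ ℝ ℝ)

lemma integral_exp_mul_exp_of_hasGaussianLaw (hUV : HasGaussianLaw (fun ω => (U ω, V ω)) μ)
    (s t : ℝ) :
    ∫ ω, Real.exp (s * U ω) * Real.exp (t * V ω) ∂μ =
      mgf U μ s * mgf V μ t * Real.exp (s * t * cov[U, V; μ]) := by
  have := hUV.isProbabilityMeasure
  have hU := hUV.fst.memLp_two
  have hV := hUV.snd.memLp_two
  have hmean : μ[fun ω => s * U ω + t * V ω] = s * μ[U] + t * μ[V] := by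
    rw [integral_add ((hU.const_mul s).integrable one_le_two)
      ((hV.const_mul t).integrable one_le_two), integral_const_mul, integral_const_mul]
  have hvar : Var[fun ω => s * U ω + t * V ω; μ] =
      s ^ 2 * Var[U; μ] + 2 * (s * (t * cov[U, V; μ])) + t ^ 2 * Var[V; μ] := by
    rw [variance_fun_add (hU.const_mul s) (hV.const_mul t), variance_const_mul,
      variance_const_mul, covariance_const_mul_left, covariance_const_mul_right]
  calc ∫ ω, Real.exp (s * U ω) * Real.exp (t * V ω) ∂μ
      = mgf (fun ω => s * U ω + t * V ω) μ 1 := by simp only [mgf, one_mul, Real.exp_add]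
    _ = _ := by
      rw [mgf_eq_exp_of_hasGaussianLaw (hasGaussianLaw_linear_combination hUV s t), hmean, hvar,
        mgf_eq_exp_of_hasGaussianLaw hUV.fst, mgf_eq_exp_of_hasGaussianLaw hUV.snd,
        ← Real.exp_add, ← Real.exp_add]
      ring_nf

/-- The exponential `exp (t (U - E[U]) / σ) / E[exp (t (U - E[U]) / σ)]` with `σ² = Var(U)`; for
Gaussian `U`, the generating function of the Hermite polynomials in the standardised variable. -/
noncomputable def normalizedExp (μ : Measure Ω) (U : Ω → ℝ) (t : ℝ) : Ω → ℝ :=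
  fun ω => Real.exp (t / √Var[U; μ] * U ω) / mgf U μ (t / √Var[U; μ])

lemma memLp_normalizedExp (hU : HasGaussianLaw U μ) (t : ℝ) : MemLp (normalizedExp μ U t) 2 μ := by
  have h := (memLp_two_exp_mul_of_hasGaussianLaw hU (t / √Var[U; μ])).mul_const
    (mgf U μ (t / √Var[U; μ]))⁻¹
  simp only [← div_eq_mul_inv] at h
  exact h

lemma covariance_normalizedExp (hUV : HasGaussianLaw (fun ω => (U ω, V ω)) μ) (t u : ℝ) :
    cov[normalizedExp μ U t, normalizedExp μ V u; μ] = Real.exp (corr μ U V * (t * u)) - 1 := by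
  have := hUV.isProbabilityMeasure
  have hmgfU := mgf_ne_zero_of_hasGaussianLaw hUV.fst (t / √Var[U; μ])
  have hmgfV := mgf_ne_zero_of_hasGaussianLaw hUV.snd (u / √Var[V; μ])
  have hcov (s s' : ℝ) : cov[fun ω => Real.exp (s * U ω), fun ω => Real.exp (s' * V ω); μ] =
      mgf U μ s * mgf V μ s' * Real.exp (s * s' * cov[U, V; μ]) - mgf U μ s * mgf V μ s' := by
    rw [covariance_eq_sub (memLp_two_exp_mul_of_hasGaussianLaw hUV.fst s)
      (memLp_two_exp_mul_of_hasGaussianLaw hUV.snd s'),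
      ← integral_exp_mul_exp_of_hasGaussianLaw hUV]
    rfl
  have hscale : t / √Var[U; μ] * (u / √Var[V; μ]) * cov[U, V; μ] = corr μ U V * (t * u) := by
    rw [corr_eq_covariance_div]
    ring
  unfold normalizedExp
  rw [covariance_fun_div_left, covariance_fun_div_right, hcov, hscale]
  field_simp

lemma covariance_normalizedExp_self (hU : HasGaussianLaw U μ) (hVarU : 0 < Var[U; μ]) (t u : ℝ) :
    cov[normalizedExp μ U t, normalizedExp μ U u; μ] = Real.exp (t * u) - 1 := by
  have hdiag : HasGaussianLaw (fun ω => (U ω, U ω)) μ :=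
    hU.map_fun ((ContinuousLinearMap.id ℝ ℝ).prod (ContinuousLinearMap.id ℝ ℝ))
  rw [covariance_normalizedExp hdiag, corr_self hU.aemeasurable hVarU, one_mul]

variable [IsProbabilityMeasure μ]

lemma centeredLp_comp_mem_closure_span_normalizedExp (hU : Measurable U)
    (hUgauss : HasGaussianLaw U μ) (hVarU : 0 < Var[U; μ]) {f : ℝ → ℝ} (hf : Measurable f)
    (hfU : MemLp (f ∘ U) 2 μ) :
    centeredLp hfU ∈ (Submodule.span ℝ (Set.range fun t =>
      centeredLp (memLp_normalizedExp hUgauss t))).topologicalClosure := by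
  rw [← Submodule.orthogonal_orthogonal_eq_closure, Submodule.mem_orthogonal']
  intro G hG
  have horth (t : ℝ) : cov[normalizedExp μ U t, G; μ] = 0 := by
    rw [← inner_centeredLp_left (memLp_normalizedExp hUgauss t)]
    exact hG _ (Submodule.subset_span ⟨t, rfl⟩)
  have hσ : √Var[U; μ] ≠ 0 := (Real.sqrt_pos.2 hVarU).ne'
  have hexp (t : ℝ) : cov[fun ω => Real.exp (t * U ω), G; μ] = 0 := by
    have h := horth (t * √Var[U; μ])
    unfold normalizedExp at h
    rw [mul_div_cancel_right₀ t hσ, covariance_fun_div_left] at h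
    exact (div_eq_zero_iff.1 h).resolve_right (mgf_ne_zero_of_hasGaussianLaw hUgauss t)
  rw [inner_centeredLp_left]
  exact covariance_comp_eq_zero_of_covariance_exp_eq_zero hU
    (memLp_two_exp_mul_of_hasGaussianLaw hUgauss) (Lp.memLp G) hexp hf hfU

theorem maxCorr_eq_abs_corr_of_hasGaussianLaw (hU : Measurable U) (hV : Measurable V)
    (hUV : HasGaussianLaw (fun ω => (U ω, V ω)) μ) (hVarU : 0 < Var[U; μ])
    (hVarV : 0 < Var[V; μ]) : maxCorr μ U V = |corr μ U V| := by
  refine le_antisymm ?_ (abs_corr_le_maxCorr hU hV hVarU hVarV)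
  refine maxCorr_le_of_forall_covariance_le (abs_nonneg _) fun f g hf hg => ?_
  rw [← inner_centeredLp (hf.memLp hU) (hg.memLp hV), ← norm_centeredLp (hf.memLp hU),
    ← norm_centeredLp (hg.memLp hV)]
  refine inner_le_abs_mul_norm_mul_norm_of_mem_closure_span
    (abs_corr_le_one hUV.fst.memLp_two hUV.snd.memLp_two) ?_ ?_ ?_
    (centeredLp_comp_mem_closure_span_normalizedExp hU hUV.fst hVarU hf.1 (hf.memLp hU))
    (centeredLp_comp_mem_closure_span_normalizedExp hV hUV.snd hVarV hg.1 (hg.memLp hV)) <;>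
    intro t u
  · rw [inner_centeredLp, covariance_normalizedExp_self hUV.fst hVarU]
  · rw [inner_centeredLp, covariance_normalizedExp_self hUV.snd hVarV]
  · rw [inner_centeredLp, covariance_normalizedExp hUV]

end GaussianGeneratingFunction

section LinearEstimation

variable {μ : Measure Ω} {Y Z : Ω → ℝ}

lemma condExp_comap_ae_eq_of_indepFun_sub_mul [IsProbabilityMeasure μ] (hY : Measurable Y)
    (hZ : Measurable Z) (hYint : Integrable Y μ) (hZint : Integrable Z μ) {c : ℝ}
    (hindep : IndepFun (fun ω => Y ω - c * Z ω) Z μ) :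
    μ[Y | MeasurableSpace.comap Z Real.measurableSpace] =ᵐ[μ]
      fun ω => c * Z ω + μ[fun ω => Y ω - c * Z ω] := by
  set W : Ω → ℝ := fun ω => Y ω - c * Z ω
  have hWm : Measurable W := by fun_prop
  have hsignal : μ[fun ω => c * Z ω | MeasurableSpace.comap Z Real.measurableSpace] =
      fun ω => c * Z ω :=
    condExp_of_stronglyMeasurable hZ.comap_le
      ((comap_measurable Z).const_mul c).stronglyMeasurable (hZint.const_mul c)
  have hresidual : μ[W | MeasurableSpace.comap Z Real.measurableSpace] =ᵐ[μ] fun _ => μ[W] :=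
    condExp_indep_eq hWm.comap_le hZ.comap_le (comap_measurable W).stronglyMeasurable hindep
  have hadd := condExp_add (hZint.const_mul c) (hYint.sub (hZint.const_mul c))
    (MeasurableSpace.comap Z Real.measurableSpace)
  have hdecomp : (fun ω => c * Z ω) + W = Y := funext fun ω => add_sub_cancel _ _
  change μ[(fun ω => c * Z ω) + W | _] =ᵐ[μ] μ[fun ω => c * Z ω | _] + μ[W | _] at hadd
  rw [hdecomp, hsignal] at hadd
  filter_upwards [hadd, hresidual] with ω hω hWω
  rw [hω, Pi.add_apply, hWω]

lemma mmse_eq_variance_sub_mul_of_indepFun [IsProbabilityMeasure μ] (hY : Measurable Y)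
    (hZ : Measurable Z) (hYint : Integrable Y μ) (hZint : Integrable Z μ) {c : ℝ}
    (hindep : IndepFun (fun ω => Y ω - c * Z ω) Z μ) :
    mmse μ Y Z = Var[fun ω => Y ω - c * Z ω; μ] := by
  rw [mmse, variance_eq_integral (by fun_prop)]
  refine integral_congr_ae ?_
  filter_upwards [condExp_comap_ae_eq_of_indepFun_sub_mul hY hZ hYint hZint hindep] with ω hω
  rw [hω, sub_add_eq_sub_sub]

lemma mmse_div_variance_of_hasGaussianLaw (hY : Measurable Y) (hZ : Measurable Z)
    (hYZ : HasGaussianLaw (fun ω => (Y ω, Z ω)) μ) (hVarY : 0 < Var[Y; μ])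
    (hVarZ : 0 < Var[Z; μ]) : mmse μ Y Z / Var[Y; μ] = 1 - corr μ Y Z ^ 2 := by
  have := hYZ.isProbabilityMeasure
  have hY2 := hYZ.fst.memLp_two
  have hZ2 := hYZ.snd.memLp_two
  set c : ℝ := cov[Y, Z; μ] / Var[Z; μ] with hc
  have hcov : cov[fun ω => Y ω - c * Z ω, Z; μ] = 0 := by
    rw [covariance_fun_sub_left hY2 (hZ2.const_mul c) hZ2, covariance_const_mul_left,
      covariance_self hZ.aemeasurable, hc, div_mul_cancel₀ _ hVarZ.ne', sub_self]
  have hjoint : HasGaussianLaw (fun ω => (Y ω - c * Z ω, Z ω)) μ :=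
    hYZ.map_fun ((ContinuousLinearMap.fst ℝ ℝ ℝ - c • ContinuousLinearMap.snd ℝ ℝ ℝ).prod
      (ContinuousLinearMap.snd ℝ ℝ ℝ))
  rw [mmse_eq_variance_sub_mul_of_indepFun hY hZ (hY2.integrable one_le_two)
    (hZ2.integrable one_le_two) (hjoint.indepFun_of_covariance_eq_zero hcov),
    variance_fun_sub hY2 (hZ2.const_mul c), variance_const_mul, covariance_const_mul_right,
    sq_corr, hc]
  field_simp
  ring

end LinearEstimation

section AdditiveNoise

variable {μ : Measure Ω} {X Y N : Ω → ℝ}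

lemma covariance_const_mul_add_right [IsFiniteMeasure μ] (hX : MemLp X 2 μ) (hY : MemLp Y 2 μ)
    (hN : MemLp N 2 μ) (hXN : cov[X, N; μ] = 0) (κ : ℝ) :
    cov[X, fun ω => κ * Y ω + N ω; μ] = κ * cov[X, Y; μ] := by
  change cov[X, (fun ω => κ * Y ω) + N; μ] = _
  rw [covariance_add_right hX (hY.const_mul κ) hN, covariance_const_mul_right, hXN, add_zero]

lemma variance_const_mul_add [IsFiniteMeasure μ] (hY : MemLp Y 2 μ) (hN : MemLp N 2 μ)
    (hYN : cov[Y, N; μ] = 0) (κ : ℝ) :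
    Var[fun ω => κ * Y ω + N ω; μ] = κ ^ 2 * Var[Y; μ] + Var[N; μ] := by
  rw [variance_fun_add (hY.const_mul κ) hN, variance_const_mul, covariance_const_mul_left, hYN]
  ring

lemma corr_const_mul_add_right [IsFiniteMeasure μ] (hX : MemLp X 2 μ) (hY : MemLp Y 2 μ)
    (hN : MemLp N 2 μ) (hXN : cov[X, N; μ] = 0) (hYN : cov[Y, N; μ] = 0)
    (hVarY : 0 < Var[Y; μ]) (κ : ℝ) :
    corr μ X (fun ω => κ * Y ω + N ω) =
      corr μ X Y * corr μ Y (fun ω => κ * Y ω + N ω) := by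
  simp only [corr_eq_covariance_div]
  rw [covariance_const_mul_add_right hX hY hN hXN, covariance_const_mul_add_right hY hY hN hYN,
    covariance_self hY.aemeasurable]
  nth_rw 2 [← Real.sq_sqrt hVarY.le]
  have hσ : √Var[Y; μ] ≠ 0 := (Real.sqrt_pos.2 hVarY).ne'
  field_simp

lemma sq_corr_const_mul_add_self [IsFiniteMeasure μ] (hY : MemLp Y 2 μ) (hN : MemLp N 2 μ)
    (hYN : cov[Y, N; μ] = 0) (hVarY : 0 < Var[Y; μ]) (κ : ℝ) :
    corr μ Y (fun ω => κ * Y ω + N ω) ^ 2 =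
      κ ^ 2 * Var[Y; μ] / (κ ^ 2 * Var[Y; μ] + Var[N; μ]) := by
  rw [sq_corr, covariance_const_mul_add_right hY hY hN hYN, covariance_self hY.aemeasurable,
    variance_const_mul_add hY hN hYN]
  field_simp

lemma hasGaussianLaw_prodMk_const_mul_add (hY : HasGaussianLaw Y μ) (hN : HasGaussianLaw N μ)
    (hYN : IndepFun Y N μ) (κ : ℝ) :
    HasGaussianLaw (fun ω => (Y ω, κ * Y ω + N ω)) μ :=
  (hYN.hasGaussianLaw hY hN).map_fun ((ContinuousLinearMap.fst ℝ ℝ ℝ).prod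
    (κ • ContinuousLinearMap.fst ℝ ℝ ℝ + ContinuousLinearMap.snd ℝ ℝ ℝ))

end AdditiveNoise

section GaussianPerturbation

variable {μ : Measure Ω} {X Y N : Ω → ℝ}

lemma measurable_Zgamma (hY : Measurable Y) (hN : Measurable N) (γ : ℝ) :
    Measurable (Zgamma Y N γ) :=
  (hY.const_mul _).add hN

lemma variance_Zgamma [IsFiniteMeasure μ] (hY : MemLp Y 2 μ) (hN : MemLp N 2 μ)
    (hYN : cov[Y, N; μ] = 0) {γ : ℝ} (hγ : 0 ≤ γ) :
    Var[Zgamma Y N γ; μ] = γ * Var[Y; μ] + Var[N; μ] := by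
  unfold Zgamma
  rw [variance_const_mul_add hY hN hYN, Real.sq_sqrt hγ]

lemma exists_sq_corr_Zgamma_eq [IsFiniteMeasure μ] (hY : MemLp Y 2 μ) (hN : MemLp N 2 μ)
    (hYN : cov[Y, N; μ] = 0) (hVarY : 0 < Var[Y; μ]) (hVarN : 0 < Var[N; μ]) {s : ℝ}
    (hs0 : 0 ≤ s) (hs1 : s < 1) : ∃ γ, 0 ≤ γ ∧ corr μ Y (Zgamma Y N γ) ^ 2 = s := by
  have hs : 0 < 1 - s := sub_pos.2 hs1
  have hγ : 0 ≤ s * Var[N; μ] / ((1 - s) * Var[Y; μ]) := by positivity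
  refine ⟨_, hγ, ?_⟩
  unfold Zgamma
  rw [sq_corr_const_mul_add_self hY hN hYN hVarY, Real.sq_sqrt hγ]
  field_simp
  ring

variable (hX : Measurable X) (hY : Measurable Y) (hN : Measurable N)
  (hYgauss : HasGaussianLaw Y μ) (hNgauss : HasGaussianLaw N μ)
  (hVarY : 0 < Var[Y; μ]) (hVarN : 0 < Var[N; μ])

include hYgauss hNgauss hVarN

lemma variance_Zgamma_pos (hYN : IndepFun Y N μ) {γ : ℝ} (hγ : 0 ≤ γ) :
    0 < Var[Zgamma Y N γ; μ] := by
  have := hYgauss.isProbabilityMeasure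
  rw [variance_Zgamma hYgauss.memLp_two hNgauss.memLp_two
    (hYN.covariance_eq_zero hYgauss.memLp_two hNgauss.memLp_two) hγ]
  positivity [variance_nonneg Y μ]

include hY hN hVarY

lemma mmse_Zgamma_div_variance (hYN : IndepFun Y N μ) {γ : ℝ} (hγ : 0 ≤ γ) :
    mmse μ Y (Zgamma Y N γ) / Var[Y; μ] = 1 - corr μ Y (Zgamma Y N γ) ^ 2 :=
  mmse_div_variance_of_hasGaussianLaw hY (measurable_Zgamma hY hN γ)
    (hasGaussianLaw_prodMk_const_mul_add hYgauss hNgauss hYN √γ) hVarY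
    (variance_Zgamma_pos hYgauss hNgauss hVarN hYN hγ)

variable (hindep : IndepFun (fun ω => (X ω, Y ω)) N μ)

include hX hindep

lemma sq_maxCorr_Zgamma_le {γ : ℝ} (hγ : 0 ≤ γ) :
    maxCorr μ X (Zgamma Y N γ) ^ 2 ≤ maxCorr μ X Y ^ 2 * corr μ Y (Zgamma Y N γ) ^ 2 := by
  have := hYgauss.isProbabilityMeasure
  have hYN : IndepFun Y N μ := hindep.comp measurable_snd measurable_id
  have hZ := measurable_Zgamma hY hN γ
  have hprocess : maxCorr μ X (Zgamma Y N γ) ≤ maxCorr μ X Y * maxCorr μ Y (Zgamma Y N γ) :=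
    maxCorr_comp_indepFun_le (φ := fun p : ℝ × ℝ => √γ * p.1 + p.2) hX hY hN hindep (by fun_prop)
  have hgebelein : maxCorr μ Y (Zgamma Y N γ) = |corr μ Y (Zgamma Y N γ)| :=
    maxCorr_eq_abs_corr_of_hasGaussianLaw hY hZ
      (hasGaussianLaw_prodMk_const_mul_add hYgauss hNgauss hYN √γ) hVarY
      (variance_Zgamma_pos hYgauss hNgauss hVarN hYN hγ)
  calc maxCorr μ X (Zgamma Y N γ) ^ 2
      ≤ (maxCorr μ X Y * |corr μ Y (Zgamma Y N γ)|) ^ 2 :=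
        pow_le_pow_left₀ (maxCorr_nonneg hX hZ) (hprocess.trans_eq (by rw [hgebelein])) 2
    _ = maxCorr μ X Y ^ 2 * corr μ Y (Zgamma Y N γ) ^ 2 := by rw [mul_pow, sq_abs]

lemma sq_corr_mul_sq_corr_Zgamma_le (hX2 : MemLp X 2 μ) (hVarX : 0 < Var[X; μ]) {γ : ℝ}
    (hγ : 0 ≤ γ) :
    corr μ X Y ^ 2 * corr μ Y (Zgamma Y N γ) ^ 2 ≤ maxCorr μ X (Zgamma Y N γ) ^ 2 := by
  have := hYgauss.isProbabilityMeasure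
  have hXN : IndepFun X N μ := hindep.comp measurable_fst measurable_id
  have hYN : IndepFun Y N μ := hindep.comp measurable_snd measurable_id
  have hY2 := hYgauss.memLp_two
  have hN2 := hNgauss.memLp_two
  have hfactor : corr μ X (Zgamma Y N γ) = corr μ X Y * corr μ Y (Zgamma Y N γ) :=
    corr_const_mul_add_right hX2 hY2 hN2 (hXN.covariance_eq_zero hX2 hN2)
      (hYN.covariance_eq_zero hY2 hN2) hVarY √γ
  rw [← mul_pow, ← hfactor, ← sq_abs]
  exact pow_le_pow_left₀ (abs_nonneg _) (abs_corr_le_maxCorr hX (measurable_Zgamma hY hN γ) hVarX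
    (variance_Zgamma_pos hYgauss hNgauss hVarN hYN hγ)) 2

lemma sENSR_le_one_sub {ε s : ℝ} (hs0 : 0 ≤ s) (hs1 : s < 1) (hs : maxCorr μ X Y ^ 2 * s ≤ ε) :
    sENSR μ X Y N ε ≤ 1 - s := by
  have := hYgauss.isProbabilityMeasure
  have hYN : IndepFun Y N μ := hindep.comp measurable_snd measurable_id
  obtain ⟨γ, hγ, rfl⟩ := exists_sq_corr_Zgamma_eq hYgauss.memLp_two hNgauss.memLp_two
    (hYN.covariance_eq_zero hYgauss.memLp_two hNgauss.memLp_two) hVarY hVarN hs0 hs1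
  refine csInf_le ⟨0, ?_⟩ ⟨γ, hγ, (sq_maxCorr_Zgamma_le hX hY hN hYgauss hNgauss hVarY hVarN
    hindep hγ).trans hs, (mmse_Zgamma_div_variance hY hN hYgauss hNgauss hVarY hVarN hYN hγ).symm⟩
  rintro _ ⟨γ', -, -, rfl⟩
  exact div_nonneg (integral_nonneg fun ω => sq_nonneg _) hVarY.le

theorem sENSR_le_one_sub_div_sq_maxCorr {ε : ℝ} (hε0 : 0 ≤ ε) (hε : ε ≤ maxCorr μ X Y ^ 2) :
    sENSR μ X Y N ε ≤ 1 - ε / maxCorr μ X Y ^ 2 := by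
  rw [le_sub_comm]
  refine le_of_forall_lt_imp_le_of_dense fun s hs => ?_
  have hmax : max s 0 ≤ ε / maxCorr μ X Y ^ 2 := max_le hs.le (by positivity)
  have hmax1 : max s 0 < 1 :=
    max_lt (hs.trans_le (div_le_one_of_le₀ hε (sq_nonneg _))) one_pos
  have hadm : maxCorr μ X Y ^ 2 * max s 0 ≤ ε := by
    rw [mul_comm]
    exact mul_le_of_le_div₀ hε0 (sq_nonneg _) hmax
  exact (le_max_left s 0).trans (le_sub_comm.1 (sENSR_le_one_sub hX hY hN hYgauss hNgauss hVarY
    hVarN hindep (le_max_right s 0) hmax1 hadm))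

theorem one_sub_div_sq_corr_le_sENSR (hX2 : MemLp X 2 μ) (hVarX : 0 < Var[X; μ])
    (hρ : corr μ X Y ≠ 0) {ε : ℝ} (hε : 0 ≤ ε) :
    1 - ε / corr μ X Y ^ 2 ≤ sENSR μ X Y N ε := by
  have := hYgauss.isProbabilityMeasure
  have hYN : IndepFun Y N μ := hindep.comp measurable_snd measurable_id
  obtain ⟨γ₀, hγ₀, hcorr₀⟩ := exists_sq_corr_Zgamma_eq hYgauss.memLp_two hNgauss.memLp_two
    (hYN.covariance_eq_zero hYgauss.memLp_two hNgauss.memLp_two) hVarY hVarN le_rfl one_pos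
  have hadm₀ : maxCorr μ X (Zgamma Y N γ₀) ^ 2 ≤ ε := by
    refine (sq_maxCorr_Zgamma_le hX hY hN hYgauss hNgauss hVarY hVarN hindep hγ₀).trans ?_
    rwa [hcorr₀, mul_zero]
  refine le_csInf ⟨_, γ₀, hγ₀, hadm₀, rfl⟩ ?_
  rintro _ ⟨γ, hγ, hadm, rfl⟩
  rw [mmse_Zgamma_div_variance hY hN hYgauss hNgauss hVarY hVarN hYN hγ]
  refine sub_le_sub_left ((le_div_iff₀' (by positivity)).2 ?_) 1
  exact (sq_corr_mul_sq_corr_Zgamma_le hX hY hN hYgauss hNgauss hVarY hVarN hindep hX2 hVarX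
    hγ).trans hadm

end GaussianPerturbation

lemma hasGaussianLaw_and_variance_pos {μ : Measure Ω} {U : Ω → ℝ} (hU : Measurable U)
    (hUlaw : ∃ (m : ℝ) (v : NNReal), 0 < v ∧ μ.map U = gaussianReal m v) :
    HasGaussianLaw U μ ∧ 0 < Var[U; μ] := by
  obtain ⟨m, v, hv, hUlaw⟩ := hUlaw
  refine ⟨⟨by rw [hUlaw]; infer_instance⟩, ?_⟩
  rw [← variance_id_map hU.aemeasurable, hUlaw, variance_id_gaussianReal]
  exact hv

theorem sENSR_bounds_gaussian_Y_general (μ : Measure Ω) [IsProbabilityMeasure μ]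
    (X Y N : Ω → ℝ) (hX : Measurable X) (hY : Measurable Y) (hN : Measurable N)
    (hVarX : 0 < evariance X μ ∧ evariance X μ < ⊤)
    (hYgauss : ∃ (m : ℝ) (v : NNReal), 0 < v ∧ μ.map Y = gaussianReal m v)
    (hρ : corr μ X Y ≠ 0)
    (hNgauss : ∃ (m : ℝ) (v : NNReal), 0 < v ∧ μ.map N = gaussianReal m v)
    (hindep : IndepFun (fun ω => (X ω, Y ω)) N μ) :
    ∀ ε ∈ Set.Icc (0 : ℝ) (maxCorr μ X Y ^ 2),
      1 - ε / corr μ X Y ^ 2 ≤ sENSR μ X Y N ε ∧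
      sENSR μ X Y N ε ≤ 1 - ε / maxCorr μ X Y ^ 2 := by
  obtain ⟨hYgauss, hVarY⟩ := hasGaussianLaw_and_variance_pos hY hYgauss
  obtain ⟨hNgauss, hVarN⟩ := hasGaussianLaw_and_variance_pos hN hNgauss
  have hX2 : MemLp X 2 μ := (evariance_lt_top_iff_memLp hX.aestronglyMeasurable).1 hVarX.2
  rintro ε ⟨hε0, hε⟩
  constructor
  · exact one_sub_div_sq_corr_le_sENSR hX hY hN hYgauss hNgauss hVarY hVarN hindep hX2
      (ENNReal.toReal_pos hVarX.1.ne' hVarX.2.ne) hρ hε0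
  · exact sENSR_le_one_sub_div_sq_maxCorr hX hY hN hYgauss hNgauss hVarY hVarN hindep hε0 hε

/-- Theorem 7: for arbitrary `X` and Gaussian `Y` (with positive
variance, `ρ(X,Y) ≠ 0`, `N` a standard Gaussian independent of `(X,Y)`),
`1 − ε/ρ(X,Y)² ≤ sENSR(ε) ≤ 1 − ε/ρ_m(X,Y)²` for all `ε ∈ [0, ρ_m(X,Y)²]`. -/
theorem sENSR_bounds_gaussian_Y (μ : Measure Ω) [IsProbabilityMeasure μ]
    (X Y N : Ω → ℝ) (hX : Measurable X) (hY : Measurable Y) (hN : Measurable N)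
    (hVarX : 0 < evariance X μ ∧ evariance X μ < ⊤)
    (hYgauss : ∃ (m : ℝ) (v : NNReal), 0 < v ∧ μ.map Y = gaussianReal m v)
    (hρ : corr μ X Y ≠ 0)
    (hNstd : μ.map N = gaussianReal 0 1)
    (hindep : IndepFun (fun ω => (X ω, Y ω)) N μ) :
    ∀ ε ∈ Set.Icc (0 : ℝ) (maxCorr μ X Y ^ 2),
      1 - ε / corr μ X Y ^ 2 ≤ sENSR μ X Y N ε ∧
      sENSR μ X Y N ε ≤ 1 - ε / maxCorr μ X Y ^ 2 := by
  exact sENSR_bounds_gaussian_Y_general μ X Y N hX hY hN hVarX hYgauss hρ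
    ⟨0, 1, one_pos, hNstd⟩ hindep
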